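/- arXiv:math/0102066 — 2 statements merged into one kernel-verified Lean document; each statement's English description precedes it below -/
import Mathlib

section
/- Let σ ∈ S_n be a permutation with σ(i) = n for some 1 ≤ i ≤ n. Then there exist unique elements σ^l ∈ S_{i−1}, σ^r ∈ S_{n−i} and γ ∈ Sh(i−1, n−i) such that σ = (γ × 1_1)·(σ^l ∨ σ^r). -/
/-! Symmetric groups `Sₙ` are modelled as `Equiv.Perm (Fin n)` (with `0`-indexed letters, so
the letter `i ∈ {1, …, n}` of the paper corresponds to `i - 1 : Fin n`), with the group law
`σ · τ = σ * τ` given by composition: `(σ * τ) x = σ (τ x)`. -/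

/-- `s` is a Coxeter generator `sᵢ`, i.e. the transposition of two consecutive letters. -/
def IsAdjacentTransposition {n : ℕ} (s : Equiv.Perm (Fin n)) : Prop :=
  ∃ (i : ℕ) (h : i + 1 < n), s = Equiv.swap ⟨i, by omega⟩ ⟨i + 1, h⟩

/-- The length `l(σ)`: the least `k` such that `σ` is a product of `k` Coxeter
generators `sᵢ`. -/
noncomputable def permLength {n : ℕ} (σ : Equiv.Perm (Fin n)) : ℕ :=
  sInf {k | ∃ L : List (Equiv.Perm (Fin n)),
    L.length = k ∧ (∀ s ∈ L, IsAdjacentTransposition s) ∧ L.prod = σ}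

/-- The weak Bruhat order on `Sₙ`: `ω ≤ σ` iff there is `τ` with `σ = τ · ω` and
`l(σ) = l(τ) + l(ω)`. -/
def weakLe {n : ℕ} (ω σ : Equiv.Perm (Fin n)) : Prop :=
  ∃ τ : Equiv.Perm (Fin n), σ = τ * ω ∧ permLength σ = permLength τ + permLength ω

/-- The strict weak Bruhat order. -/
def weakLt {n : ℕ} (ω σ : Equiv.Perm (Fin n)) : Prop :=
  weakLe ω σ ∧ ω ≠ σ

/-- `σ × τ`: the image of `(σ, τ)` under the canonical embedding
`S_p × S_q ↪ S_{p+q}`, where `σ` permutes the first `p` letters and `τ` the last `q`. -/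
def blockSum {p q : ℕ} (σ : Equiv.Perm (Fin p)) (τ : Equiv.Perm (Fin q)) :
    Equiv.Perm (Fin (p + q)) :=
  finSumFinEquiv.symm.trans ((Equiv.sumCongr σ τ).trans finSumFinEquiv)

/-- `ξ` is a `(p,q)`-shuffle: `ξ(1) < … < ξ(p)` and `ξ(p+1) < … < ξ(p+q)`. -/
def IsShuffle (p q : ℕ) (ξ : Equiv.Perm (Fin (p + q))) : Prop :=
  (∀ i j : Fin (p + q), (i : ℕ) < (j : ℕ) → (j : ℕ) < p → ξ i < ξ j) ∧
  (∀ i j : Fin (p + q), p ≤ (i : ℕ) → (i : ℕ) < (j : ℕ) → ξ i < ξ j)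

/-- `ξ_{p,q} ∈ S_{p+q}`: the permutation with one-line notation
`(q+1, q+2, …, q+p, 1, 2, …, q)`. -/
def xi (p q : ℕ) : Equiv.Perm (Fin (p + q)) :=
  finSumFinEquiv.symm.trans ((Equiv.sumComm (Fin p) (Fin q)).trans
    (finSumFinEquiv.trans (finCongr (Nat.add_comm q p))))

/-- Transport of a permutation along an equality of the number of letters. -/
def permCast {m n : ℕ} (h : m = n) (π : Equiv.Perm (Fin m)) : Equiv.Perm (Fin n) :=
  (finCongr h).permCongr π

/-- The grafting `σ ∨ τ ∈ S_{p+q+1}` of `σ ∈ S_p` and `τ ∈ S_q`: in 1-indexed one-line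
notation, `(σ∨τ)(i) = σ(i)` for `1 ≤ i ≤ p`, `(σ∨τ)(p+1) = p+q+1`, and
`(σ∨τ)(i) = τ(i-p-1) + p` for `p+2 ≤ i ≤ p+q+1`.  (Equivalently,
`σ ∨ τ = (σ × τ × 1₁) · s_{p+q} · s_{p+q-1} · ⋯ · s_{p+1}`.) -/
def graft {p q : ℕ} (σ : Equiv.Perm (Fin p)) (τ : Equiv.Perm (Fin q)) :
    Equiv.Perm (Fin (p + q + 1)) :=
  blockSum (blockSum σ τ) (1 : Equiv.Perm (Fin 1)) *
    permCast (by omega) (blockSum (1 : Equiv.Perm (Fin p)) (finRotate (q + 1))⁻¹)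

/-- The `over` operation on permutations: `σ / τ := σ × τ`. -/
def overP {p q : ℕ} (σ : Equiv.Perm (Fin p)) (τ : Equiv.Perm (Fin q)) :
    Equiv.Perm (Fin (p + q)) :=
  blockSum σ τ

/-- The `under` operation on permutations: `σ \ τ := ξ_{p,q} · (σ × τ)`. -/
def underP {p q : ℕ} (σ : Equiv.Perm (Fin p)) (τ : Equiv.Perm (Fin q)) :
    Equiv.Perm (Fin (p + q)) :=
  xi p q * blockSum σ τ

/-! Right multiplication by the inverse of the cycle in `σˡ ∨ σʳ = (σˡ × σʳ × 1₁) · cycle` turns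
the permutations sending letter `a` to the last letter into those fixing the last letter, that is,
into the `ρ × 1₁` with `ρ ∈ S_{a+b}`. It thus suffices to factor `ρ` uniquely as `γ · (σˡ × σʳ)`
with `γ` a shuffle: `γ` must list the values of `ρ` on each of the two blocks in increasing order,
and there is exactly one way of sorting each block. -/

open Equiv Function

section BlockSum

variable {p q : ℕ}

@[simp]
theorem blockSum_castAdd (σ : Perm (Fin p)) (τ : Perm (Fin q)) (i : Fin p) :
    blockSum σ τ (Fin.castAdd q i) = Fin.castAdd q (σ i) := by
  simp [blockSum]

@[simp]
theorem blockSum_natAdd (σ : Perm (Fin p)) (τ : Perm (Fin q)) (j : Fin q) :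
    blockSum σ τ (Fin.natAdd p j) = Fin.natAdd p (τ j) := by
  simp [blockSum]

theorem blockSum_mul (σ σ' : Perm (Fin p)) (τ τ' : Perm (Fin q)) :
    blockSum (σ * σ') (τ * τ') = blockSum σ τ * blockSum σ' τ' := by
  ext x
  induction x using Fin.addCases <;> simp

theorem blockSum_one_one : blockSum (1 : Perm (Fin p)) (1 : Perm (Fin q)) = 1 := by
  ext x
  induction x using Fin.addCases <;> simp

theorem blockSum_inv (σ : Perm (Fin p)) (τ : Perm (Fin q)) :
    blockSum σ⁻¹ τ⁻¹ = (blockSum σ τ)⁻¹ :=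
  eq_inv_of_mul_eq_one_left <| by
    rw [← blockSum_mul, inv_mul_cancel, inv_mul_cancel, blockSum_one_one]

theorem blockSum_left_injective (τ : Perm (Fin q)) :
    Injective fun σ : Perm (Fin p) => blockSum σ τ := by
  intro σ σ' h
  ext i
  simpa using congrArg Fin.val (Equiv.congr_fun h (Fin.castAdd q i))

theorem exists_eq_blockSum_one (π : Perm (Fin (p + q)))
    (hπ : ∀ j, π (Fin.natAdd p j) = Fin.natAdd p j) :
    ∃ ρ : Perm (Fin p), π = blockSum ρ (1 : Perm (Fin q)) := by
  have hinr : Set.MapsTo (finSumFinEquiv.symm.permCongr π)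
      (Set.range (Sum.inr : Fin q → Fin p ⊕ Fin q)) (Set.range Sum.inr) := by
    rintro _ ⟨j, rfl⟩
    simp [hπ]
  obtain ⟨⟨ρ, τ⟩, hρτ⟩ := Perm.mem_sumCongrHom_range_of_perm_mapsTo_inl
    ((Perm.perm_mapsTo_inl_iff_mapsTo_inr _).2 hinr)
  have hsum : π = blockSum ρ τ := by
    ext x
    simpa [blockSum] using
      congrArg Fin.val (congrArg finSumFinEquiv (Equiv.congr_fun hρτ (finSumFinEquiv.symm x))).symm
  have hτ : τ = 1 := by
    ext j
    simpa [hsum] using congrArg Fin.val (hπ j)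
  exact ⟨ρ, hτ ▸ hsum⟩

end BlockSum

theorem existsUnique_perm_strictMono_comp {m : ℕ} {α : Type*} [LinearOrder α] {f : Fin m → α}
    (hf : Injective f) : ∃! s : Perm (Fin m), StrictMono (f ∘ s) := by
  refine ⟨Tuple.sort f,
    (Tuple.monotone_sort f).strictMono_of_injective (hf.comp (Tuple.sort f).injective),
    fun s hs => ?_⟩
  exact Equiv.coe_fn_injective <|
    hf.comp_left (Tuple.unique_monotone hs.monotone (Tuple.monotone_sort f))

section Shuffle

variable {p q : ℕ}

theorem isShuffle_iff_strictMono (γ : Perm (Fin (p + q))) :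
    IsShuffle p q γ ↔ StrictMono (γ ∘ Fin.castAdd q) ∧ StrictMono (γ ∘ Fin.natAdd p) := by
  constructor
  · rintro ⟨hleft, hright⟩
    exact ⟨fun i j hij => hleft _ _ hij j.isLt,
      fun i j hij => hright _ _ (by simp) (by simpa using hij)⟩
  · rintro ⟨hleft, hright⟩
    refine ⟨fun i j hij hj => ?_, fun i j hi hij => ?_⟩
    · exact hleft (show (⟨i, hij.trans hj⟩ : Fin p) < ⟨j, hj⟩ from hij)
    · obtain ⟨i, rfl⟩ := (Fin.range_natAdd p q).ge hi
      obtain ⟨j, rfl⟩ := (Fin.range_natAdd p q).ge (hi.trans hij.le)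
      exact hright (by simpa using hij)

theorem isShuffle_mul_blockSum_iff (ρ : Perm (Fin (p + q))) (s : Perm (Fin p))
    (t : Perm (Fin q)) :
    IsShuffle p q (ρ * blockSum s t) ↔
      StrictMono ((ρ ∘ Fin.castAdd q) ∘ s) ∧ StrictMono ((ρ ∘ Fin.natAdd p) ∘ t) := by
  have hleft : (ρ * blockSum s t) ∘ Fin.castAdd q = (ρ ∘ Fin.castAdd q) ∘ s := by
    ext; simp
  have hright : (ρ * blockSum s t) ∘ Fin.natAdd p = (ρ ∘ Fin.natAdd p) ∘ t := by
    ext; simp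
  rw [isShuffle_iff_strictMono, hleft, hright]

theorem existsUnique_shuffle_mul_blockSum (ρ : Perm (Fin (p + q))) :
    ∃! d : Perm (Fin p) × Perm (Fin q) × Perm (Fin (p + q)),
      IsShuffle p q d.2.2 ∧ ρ = d.2.2 * blockSum d.1 d.2.1 := by
  obtain ⟨s, hs, hs_unique⟩ := existsUnique_perm_strictMono_comp
    (ρ.injective.comp (Fin.castAdd_injective p q))
  obtain ⟨t, ht, ht_unique⟩ := existsUnique_perm_strictMono_comp
    (ρ.injective.comp (Fin.natAdd_injective q p))
  refine ⟨(s⁻¹, t⁻¹, ρ * blockSum s t), ⟨(isShuffle_mul_blockSum_iff ρ s t).2 ⟨hs, ht⟩, ?_⟩, ?_⟩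
  · rw [blockSum_inv, mul_inv_cancel_right]
  · rintro ⟨l, r, γ⟩ ⟨hγ, hρ⟩
    obtain rfl : γ = ρ * blockSum l⁻¹ r⁻¹ := by
      rw [blockSum_inv, eq_mul_inv_iff_mul_eq, hρ]
    obtain ⟨hl, hr⟩ := (isShuffle_mul_blockSum_iff ρ l⁻¹ r⁻¹).1 hγ
    rw [← hs_unique _ hl, ← ht_unique _ hr, inv_inv, inv_inv]

end Shuffle

section Graft

/-- The cycle `s_{p+q} · s_{p+q-1} · ⋯ · s_{p+1}` occurring in the definition of `graft`: with
`0`-indexed letters it sends `p` to `p + q` and each `j > p` to `j - 1`. -/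
def graftCycle (p q : ℕ) : Perm (Fin (p + q + 1)) :=
  permCast (Nat.add_assoc p q 1).symm (blockSum (1 : Perm (Fin p)) (finRotate (q + 1))⁻¹)

theorem graftCycle_natAdd_zero (p q : ℕ) :
    graftCycle p q (Fin.natAdd p (0 : Fin (q + 1))) = Fin.last (p + q) := by
  have hrot : (finRotate (q + 1))⁻¹ 0 = Fin.last q := by
    rw [Perm.inv_eq_iff_eq, finRotate_last]
  calc graftCycle p q (Fin.natAdd p (0 : Fin (q + 1)))
      = blockSum (1 : Perm (Fin p)) (finRotate (q + 1))⁻¹ (Fin.natAdd p 0) := rfl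
    _ = Fin.last (p + q) := by rw [blockSum_natAdd, hrot, Fin.natAdd_last]

variable {p q : ℕ}

theorem graft_eq_mul_graftCycle (σ : Perm (Fin p)) (τ : Perm (Fin q)) :
    graft σ τ = blockSum (blockSum σ τ) (1 : Perm (Fin 1)) * graftCycle p q :=
  rfl

theorem blockSum_one_mul_graft (γ : Perm (Fin (p + q))) (σ : Perm (Fin p)) (τ : Perm (Fin q)) :
    blockSum γ (1 : Perm (Fin 1)) * graft σ τ =
      blockSum (γ * blockSum σ τ) (1 : Perm (Fin 1)) * graftCycle p q := by
  rw [graft_eq_mul_graftCycle, ← mul_assoc, ← blockSum_mul, mul_one]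

theorem exists_eq_blockSum_one_mul_graftCycle (σ : Perm (Fin (p + q + 1)))
    (hσ : σ (Fin.natAdd p (0 : Fin (q + 1))) = Fin.last (p + q)) :
    ∃ ρ : Perm (Fin (p + q)), σ = blockSum ρ (1 : Perm (Fin 1)) * graftCycle p q := by
  have hfix : (σ * (graftCycle p q)⁻¹) (Fin.last (p + q)) = Fin.last (p + q) := by
    have hinv : (graftCycle p q)⁻¹ (Fin.last (p + q)) = Fin.natAdd p (0 : Fin (q + 1)) :=
      Perm.inv_eq_iff_eq.2 (graftCycle_natAdd_zero p q).symm
    rw [Perm.mul_apply, hinv, hσ]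
  obtain ⟨ρ, hρ⟩ := exists_eq_blockSum_one (q := 1) (σ * (graftCycle p q)⁻¹) fun j => by
    rwa [Subsingleton.elim j 0]
  exact ⟨ρ, mul_inv_eq_iff_eq_mul.1 hρ⟩

end Graft

/-- Proposition 1.8: let `σ ∈ Sₙ` with `σ(i) = n` for some `1 ≤ i ≤ n`
(here `n = a + b + 1` and `i = a + 1`, so `i - 1 = a` and `n - i = b`; in our 0-indexed
encoding the hypothesis reads `σ(a) = a + b`).  Then there are unique
`σˡ ∈ S_{i-1}`, `σʳ ∈ S_{n-i}` and `γ ∈ Sh(i-1, n-i)` with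
`σ = (γ × 1₁) · (σˡ ∨ σʳ)`. -/
theorem stmt5 (a b : ℕ) (σ : Equiv.Perm (Fin (a + b + 1)))
    (hσ : σ ⟨a, by omega⟩ = ⟨a + b, by omega⟩) :
    ∃! d : Equiv.Perm (Fin a) × Equiv.Perm (Fin b) × Equiv.Perm (Fin (a + b)),
      IsShuffle a b d.2.2 ∧
      σ = blockSum d.2.2 (1 : Equiv.Perm (Fin 1)) * graft d.1 d.2.1 := by
  obtain ⟨ρ, rfl⟩ := exists_eq_blockSum_one_mul_graftCycle σ hσ
  have hfactor (d : Perm (Fin a) × Perm (Fin b) × Perm (Fin (a + b))) :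
      blockSum ρ (1 : Perm (Fin 1)) * graftCycle a b =
          blockSum d.2.2 (1 : Perm (Fin 1)) * graft d.1 d.2.1 ↔
        ρ = d.2.2 * blockSum d.1 d.2.1 := by
    rw [blockSum_one_mul_graft, mul_left_inj]
    exact (blockSum_left_injective 1).eq_iff
  simp only [hfactor]
  exact existsUnique_shuffle_mul_blockSum ρ
end

section
/- For all σ ∈ S_p and τ ∈ S_q, the set {x·(σ × τ) : x ∈ Sh(p,q)} equals the weak Bruhat order interval {ω ∈ S_{p+q} : σ/τ ≤ ω ≤ σ\τ}. Consequently, in the Malvenuto–Reutenauer algebra ℚ[S_∞], the product σ * τ equals the sum Σ ω over all permutations ω ∈ S_{p+q} with σ/τ ≤ ω ≤ σ\τ. -/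
attribute [local instance] Classical.propDecidable

/-!
The inversion set satisfies the cocycle identity `Inv(τ·ω) = Inv(ω) ∆ ω⁻¹(Inv(τ))`. It makes the
length of a permutation its number of inversions and turns `ω ≤ σ` into `Inv(ω) ⊆ Inv(σ)`. The
inversions of `ξ_{p,q}` are exactly the pairs meeting both blocks `{1, …, p}` and
`{p+1, …, p+q}`, so `Sh(p,q)` is the interval `[1, ξ_{p,q}]`. A shuffle creates no inversion inside
a block while `σ × τ` creates none across blocks, hence `σ/τ ≤ σ\τ`; whenever `β ≤ ξ·β`, lengths
add up so that right multiplication by `β` carries `[1, ξ]` onto `[β, ξ·β]`.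
-/

open Finset Equiv
open scoped symmDiff

lemma card_symmDiff_add_two_mul_card_inter {α : Type*} [DecidableEq α] (s t : Finset α) :
    #(s ∆ t) + 2 * #(s ∩ t) = #s + #t := by
  have hunion : #(s ∆ t) = #(s \ t) + #(t \ s) := card_union_of_disjoint disjoint_sdiff_sdiff
  have hs := card_sdiff_add_card_inter s t
  have ht := card_sdiff_add_card_inter t s
  rw [inter_comm] at ht
  lia

section Inversions

variable {α : Type*} [LinearOrder α]

section Fintype

variable [Fintype α]

/-- The inversion set of `σ`. An inversion is encoded as an unordered pair `{a, b}` whose order is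
reversed by `σ`, so that a permutation of `α` acts on inversions without reordering them. -/
noncomputable def inversions (σ : Perm α) : Finset (Sym2 α) :=
  {z | σ z.sup < σ z.inf}

lemma mk_mem_inversions_of_lt {σ : Perm α} {a b : α} (hab : a < b) :
    s(a, b) ∈ inversions σ ↔ σ b < σ a := by
  simp [inversions, hab.le]

lemma mk_mem_inversions {σ : Perm α} {a b : α} :
    s(a, b) ∈ inversions σ ↔ a < b ∧ σ b < σ a ∨ b < a ∧ σ a < σ b := by
  rcases lt_trichotomy a b with hab | rfl | hba
  · simp [mk_mem_inversions_of_lt hab, hab, hab.not_gt]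
  · simp [inversions]
  · simp [Sym2.eq_swap (a := a), mk_mem_inversions_of_lt hba, hba, hba.not_gt]

lemma inversions_subset_iff {ω σ : Perm α} :
    inversions ω ⊆ inversions σ ↔ ∀ a b, a < b → ω b < ω a → σ b < σ a := by
  constructor
  · intro h a b hab hω
    exact (mk_mem_inversions_of_lt hab).1 (h ((mk_mem_inversions_of_lt hab).2 hω))
  · intro h z
    induction z with | _ a b
    simp only [mk_mem_inversions]
    exact Or.imp (fun ⟨hab, hω⟩ ↦ ⟨hab, h a b hab hω⟩) fun ⟨hba, hω⟩ ↦ ⟨hba, h b a hba hω⟩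

lemma inversions_one : inversions (1 : Perm α) = ∅ :=
  filter_eq_empty_iff.2 fun z _ ↦ z.inf_le_sup.not_gt

lemma inversions_mul [DecidableEq α] (τ ω : Perm α) :
    inversions (τ * ω) = inversions ω ∆ (inversions τ).map ω.symm.toEmbedding.sym2Map := by
  ext z
  induction z with | _ a b
  have hpullback : s(a, b) ∈ (inversions τ).map ω.symm.toEmbedding.sym2Map ↔
      s(ω a, ω b) ∈ inversions τ := by
    simpa using mem_map' ω.symm.toEmbedding.sym2Map (a := s(ω a, ω b))
  have hω : ω a = ω b ↔ a = b := ω.apply_eq_iff_eq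
  have hτ : τ (ω a) = τ (ω b) ↔ ω a = ω b := τ.apply_eq_iff_eq
  simp only [mem_symmDiff, hpullback, mk_mem_inversions, Perm.mul_apply]
  grind

lemma card_inversions_mul_add [DecidableEq α] (τ ω : Perm α) :
    #(inversions (τ * ω)) +
        2 * #(inversions ω ∩ (inversions τ).map ω.symm.toEmbedding.sym2Map) =
      #(inversions τ) + #(inversions ω) := by
  rw [inversions_mul, card_symmDiff_add_two_mul_card_inter, card_map, add_comm]

lemma card_inversions_mul_le (τ ω : Perm α) :
    #(inversions (τ * ω)) ≤ #(inversions τ) + #(inversions ω) :=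
  (Nat.le_add_right _ _).trans_eq (card_inversions_mul_add τ ω)

lemma card_inversions_mul_eq_add_iff (τ ω : Perm α) :
    #(inversions (τ * ω)) = #(inversions τ) + #(inversions ω) ↔
      inversions ω ⊆ inversions (τ * ω) := by
  rw [← card_inversions_mul_add, inversions_mul τ ω, le_symmDiff_iff_left,
    disjoint_iff_inter_eq_empty, ← card_eq_zero]
  lia

lemma inversions_swap_of_covBy [DecidableEq α] {a b : α} (hab : a ⋖ b) :
    inversions (swap a b) = {s(a, b)} := by
  ext z
  induction z with | _ c d
  have hlt := hab.lt
  have hc : c < b → c ≤ a := hab.le_of_lt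
  have hd : d < b → d ≤ a := hab.le_of_lt
  simp only [mk_mem_inversions, mem_singleton, Sym2.eq_iff, swap_apply_def]
  grind

lemma card_inversions_mul_swap_add_one [DecidableEq α] {σ : Perm α} {a b : α} (hab : a ⋖ b)
    (hσ : σ b < σ a) :
    #(inversions (σ * swap a b)) + 1 = #(inversions σ) := by
  have hinter : inversions (swap a b) ∩
      (inversions σ).map (swap a b).symm.toEmbedding.sym2Map = {s(a, b)} := by
    rw [inversions_swap_of_covBy hab, inter_eq_left, singleton_subset_iff, mem_map]
    exact ⟨s(a, b), (mk_mem_inversions_of_lt hab.lt).2 hσ, by simp [Sym2.eq_swap]⟩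
  have hcard := card_inversions_mul_add σ (swap a b)
  rw [hinter, inversions_swap_of_covBy hab, card_singleton] at hcard
  lia

end Fintype

lemma exists_covBy_apply_lt_of_ne_one [LocallyFiniteOrder α] [WellFoundedLT α] {σ : Perm α}
    (hσ : σ ≠ 1) : ∃ a b, a ⋖ b ∧ σ b < σ a := by
  contrapose! hσ
  have hmono : StrictMono σ := (strictMono_iff_forall_covBy σ).2 fun a b hab ↦
    (hσ a b hab).lt_of_ne (σ.injective.ne hab.lt.ne)
  have hid : hmono.orderIsoOfSurjective σ σ.surjective = OrderIso.refl α := Subsingleton.elim _ _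
  exact Equiv.ext fun a ↦ DFunLike.congr_fun hid a

end Inversions

section WeakOrder

variable {n : ℕ}

lemma isAdjacentTransposition_iff_exists_covBy {s : Perm (Fin n)} :
    IsAdjacentTransposition s ↔ ∃ a b, a ⋖ b ∧ s = swap a b := by
  constructor
  · rintro ⟨i, hi, rfl⟩
    exact ⟨_, _, by simp, rfl⟩
  · rintro ⟨⟨i, hi⟩, ⟨j, hj⟩, hij, rfl⟩
    obtain rfl : i + 1 = j := by simpa using hij
    exact ⟨i, hj, rfl⟩

lemma card_inversions_list_prod_le {L : List (Perm (Fin n))}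
    (hL : ∀ s ∈ L, IsAdjacentTransposition s) : #(inversions L.prod) ≤ L.length := by
  induction L with
  | nil => simp [inversions_one]
  | cons s L ih =>
    rw [List.forall_mem_cons] at hL
    obtain ⟨a, b, hab, rfl⟩ := isAdjacentTransposition_iff_exists_covBy.1 hL.1
    calc #(inversions (swap a b * L.prod))
        ≤ #(inversions (swap a b)) + #(inversions L.prod) := card_inversions_mul_le _ _
      _ ≤ 1 + L.length := by
        rw [inversions_swap_of_covBy hab, card_singleton]
        gcongr
        exact ih hL.2
      _ = (swap a b :: L).length := add_comm _ _

lemma exists_word_length_eq_card_inversions (σ : Perm (Fin n)) :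
    ∃ L : List (Perm (Fin n)), L.length = #(inversions σ) ∧
      (∀ s ∈ L, IsAdjacentTransposition s) ∧ L.prod = σ := by
  induction hk : #(inversions σ) using Nat.strong_induction_on generalizing σ with | _ k ih
  by_cases hσ : σ = 1
  · exact ⟨[], by simp [← hk, hσ, inversions_one]⟩
  obtain ⟨a, b, hab, hdesc⟩ := exists_covBy_apply_lt_of_ne_one hσ
  have hcard := card_inversions_mul_swap_add_one hab hdesc
  obtain ⟨L, hlength, hadj, hprod⟩ := ih _ (by lia) (σ * swap a b) rfl
  refine ⟨L ++ [swap a b], by rw [List.length_append, hlength, List.length_singleton, hcard, hk],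
    ?_, by simp [hprod, mul_assoc]⟩
  simp only [List.forall_mem_append, List.forall_mem_singleton]
  exact ⟨hadj, isAdjacentTransposition_iff_exists_covBy.2 ⟨a, b, hab, rfl⟩⟩

lemma permLength_eq_card_inversions (σ : Perm (Fin n)) : permLength σ = #(inversions σ) := by
  have hword := exists_word_length_eq_card_inversions σ
  refine le_antisymm (Nat.sInf_le hword) (le_csInf ⟨_, hword⟩ ?_)
  rintro _ ⟨L, rfl, hadj, rfl⟩
  exact card_inversions_list_prod_le hadj

lemma permLength_mul_le (τ ω : Perm (Fin n)) :
    permLength (τ * ω) ≤ permLength τ + permLength ω := by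
  simpa only [permLength_eq_card_inversions] using card_inversions_mul_le τ ω

lemma weakLe_iff_permLength_eq {ω σ : Perm (Fin n)} :
    weakLe ω σ ↔ permLength σ = permLength (σ * ω⁻¹) + permLength ω := by
  constructor
  · rintro ⟨τ, rfl, hlength⟩
    rwa [mul_inv_cancel_right]
  · exact fun hlength ↦ ⟨σ * ω⁻¹, (inv_mul_cancel_right σ ω).symm, hlength⟩

lemma weakLe_iff_inversions_subset {ω σ : Perm (Fin n)} :
    weakLe ω σ ↔ inversions ω ⊆ inversions σ := by
  have hadd := card_inversions_mul_eq_add_iff (σ * ω⁻¹) ω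
  rw [inv_mul_cancel_right] at hadd
  simp only [weakLe_iff_permLength_eq, permLength_eq_card_inversions, hadd]

lemma weakLe_iff_forall_lt {ω σ : Perm (Fin n)} :
    weakLe ω σ ↔ ∀ a b, a < b → ω b < ω a → σ b < σ a :=
  weakLe_iff_inversions_subset.trans inversions_subset_iff

lemma weakLe_and_weakLe_mul_right_iff {β ξ : Perm (Fin n)} (hβ : weakLe β (ξ * β))
    (x : Perm (Fin n)) :
    weakLe β (x * β) ∧ weakLe (x * β) (ξ * β) ↔ weakLe x ξ := by
  have hquot : ξ * β * (x * β)⁻¹ = ξ * x⁻¹ := by group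
  simp only [weakLe_iff_permLength_eq, mul_inv_cancel_right, hquot] at hβ ⊢
  have hxβ := permLength_mul_le x β
  have hξβ := permLength_mul_le (ξ * x⁻¹) (x * β)
  have hξ := permLength_mul_le (ξ * x⁻¹) x
  rw [← mul_assoc, inv_mul_cancel_right] at hξβ
  rw [inv_mul_cancel_right] at hξ
  lia

end WeakOrder

section Shuffles

variable {p q : ℕ}

lemma blockSum_apply_lt_iff (σ : Perm (Fin p)) (τ : Perm (Fin q)) (i : Fin (p + q)) :
    (blockSum σ τ i : ℕ) < p ↔ (i : ℕ) < p := by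
  induction i using Fin.addCases <;> simp [blockSum]

lemma coe_xi_apply (i : Fin (p + q)) :
    (xi p q i : ℕ) = if (i : ℕ) < p then (i : ℕ) + q else i - p := by
  induction i using Fin.addCases <;> simp [xi, add_comm]

lemma xi_lt_xi_iff_of_lt {i j : Fin (p + q)} (hij : i < j) :
    xi p q j < xi p q i ↔ (i : ℕ) < p ∧ p ≤ j := by
  rw [Fin.lt_def] at hij ⊢
  grind [coe_xi_apply]

lemma isShuffle_iff_forall_lt {x : Perm (Fin (p + q))} :
    IsShuffle p q x ↔ ∀ i j, i < j → x j < x i → (i : ℕ) < p ∧ p ≤ j := by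
  constructor
  · rintro ⟨hfirst, hlast⟩ i j hij hx
    exact ⟨lt_of_not_ge fun hi ↦ (hlast i j hi hij).not_gt hx,
      le_of_not_gt fun hj ↦ (hfirst i j hij hj).not_gt hx⟩
  · intro hcross
    have hmono (i j : Fin (p + q)) (hij : i < j) (hblock : ¬ ((i : ℕ) < p ∧ p ≤ j)) :
        x i < x j :=
      (le_of_not_gt (mt (hcross i j hij) hblock)).lt_of_ne (x.injective.ne hij.ne)
    exact ⟨fun i j hij hj ↦ hmono i j hij fun hblock ↦ hj.not_ge hblock.2,
      fun i j hi hij ↦ hmono i j hij fun hblock ↦ hi.not_gt hblock.1⟩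

lemma isShuffle_iff_weakLe_xi {x : Perm (Fin (p + q))} : IsShuffle p q x ↔ weakLe x (xi p q) := by
  rw [isShuffle_iff_forall_lt, weakLe_iff_forall_lt]
  exact forall₃_congr fun i j hij ↦ imp_congr_right fun _ ↦ (xi_lt_xi_iff_of_lt hij).symm

lemma weakLe_overP_underP (σ : Perm (Fin p)) (τ : Perm (Fin q)) :
    weakLe (overP σ τ) (underP σ τ) := by
  rw [weakLe_iff_forall_lt]
  intro i j hij hinv
  refine (le_of_not_gt fun hξ ↦ ?_).lt_of_ne ((underP σ τ).injective.ne hij.ne')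
  have hcross := (xi_lt_xi_iff_of_lt hinv).1 hξ
  simp only [overP, blockSum_apply_lt_iff, ← not_lt] at hcross
  lia

lemma isShuffle_iff_weakLe_and_weakLe (σ : Perm (Fin p)) (τ : Perm (Fin q))
    (x : Perm (Fin (p + q))) :
    IsShuffle p q x ↔
      weakLe (overP σ τ) (x * blockSum σ τ) ∧ weakLe (x * blockSum σ τ) (underP σ τ) :=
  isShuffle_iff_weakLe_xi.trans (weakLe_and_weakLe_mul_right_iff (weakLe_overP_underP σ τ) x).symm

end Shuffles

/-- Theorem 4.1: for `σ ∈ S_p`, `τ ∈ S_q`, the set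
`{x · (σ × τ) : x ∈ Sh(p,q)}` equals the weak Bruhat interval
`{ω ∈ S_{p+q} : σ/τ ≤ ω ≤ σ\τ}`; consequently, in the Malvenuto–Reutenauer algebra
`ℚ[S_∞]` (whose degree `p+q` component is `ℚ[S_{p+q}] = Perm (Fin (p+q)) →₀ ℚ`), the
product `σ * τ = Σ_{x ∈ Sh(p,q)} x · (σ × τ)` equals `Σ_{σ/τ ≤ ω ≤ σ\τ} ω`. -/
theorem stmt8 (p q : ℕ) (σ : Equiv.Perm (Fin p)) (τ : Equiv.Perm (Fin q)) :
    ((Finset.univ.filter (IsShuffle p q)).image (fun x => x * blockSum σ τ) =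
      Finset.univ.filter (fun ω => weakLe (overP σ τ) ω ∧ weakLe ω (underP σ τ))) ∧
    (∑ x ∈ Finset.univ.filter (IsShuffle p q),
        Finsupp.single (x * blockSum σ τ) (1 : ℚ) =
      ∑ ω ∈ Finset.univ.filter (fun ω => weakLe (overP σ τ) ω ∧ weakLe ω (underP σ τ)),
        Finsupp.single ω (1 : ℚ)) := by
  have himage : (Finset.univ.filter (IsShuffle p q)).image (fun x => x * blockSum σ τ) =
      Finset.univ.filter (fun ω => weakLe (overP σ τ) ω ∧ weakLe ω (underP σ τ)) := by
    ext ω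
    simp only [mem_image, mem_filter_univ, isShuffle_iff_weakLe_and_weakLe σ τ]
    exact ⟨by rintro ⟨x, hx, rfl⟩; exact hx,
      fun hω ↦ ⟨ω * (blockSum σ τ)⁻¹, by simpa using hω, by simp⟩⟩
  refine ⟨himage, ?_⟩
  rw [← himage, sum_image (mul_left_injective _).injOn]
end
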